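/- Let W be a graphon, n ≥ k ≥ 1 integers, δ > 0, and P an equipartition of {1,…,n} into k parts. Then (log₂ N̂_□(n,δ;W)) / n² ≤ (1/2)·Ent(E[W|P]) + (1/2)·h̃(4k²δ) + 2k²·(log₂ n)/n². -/

import Mathlib

open MeasureTheory Set Filter

noncomputable section

/-- A graphon: a symmetric measurable function `ℝ → ℝ → ℝ` with values in `[0,1]`
(only its values on `[0,1]²` matter). -/
def IsGraphon (W : ℝ → ℝ → ℝ) : Prop :=
  (∀ x y, W x y = W y x) ∧ Measurable (Function.uncurry W) ∧
    ∀ x y, W x y ∈ Set.Icc (0 : ℝ) 1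

/-- The cut norm `‖U‖_□`, the supremum over measurable `S, T ⊆ [0,1]` of
`|∫_{S×T} U|`. -/
def cutNorm (U : ℝ → ℝ → ℝ) : ℝ :=
  sSup { r : ℝ | ∃ S T : Set ℝ, MeasurableSet S ∧ MeasurableSet T ∧
    S ⊆ Set.Icc 0 1 ∧ T ⊆ Set.Icc 0 1 ∧
    r = |∫ p in S ×ˢ T, U p.1 p.2| }

/-- `d_□(W₁, W₂) = ‖W₁ - W₂‖_□`. -/
def dCut (W₁ W₂ : ℝ → ℝ → ℝ) : ℝ := cutNorm (fun x y => W₁ x y - W₂ x y)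

/-- A Lebesgue-measure-preserving map `[0,1] → [0,1]`. -/
def IsMPSelf (σ : ℝ → ℝ) : Prop :=
  MeasureTheory.MeasurePreserving σ
      (MeasureTheory.volume.restrict (Set.Icc (0:ℝ) 1))
      (MeasureTheory.volume.restrict (Set.Icc (0:ℝ) 1)) ∧
    Set.MapsTo σ (Set.Icc (0:ℝ) 1) (Set.Icc (0:ℝ) 1)

/-- The cut distance `δ_□(W₁, W₂)`. -/
def deltaCut (W₁ W₂ : ℝ → ℝ → ℝ) : ℝ :=
  sInf { r : ℝ | ∃ σ₁ σ₂ : ℝ → ℝ, IsMPSelf σ₁ ∧ IsMPSelf σ₂ ∧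
    r = cutNorm (fun x y => W₁ (σ₁ x) (σ₁ y) - W₂ (σ₂ x) (σ₂ y)) }

/-- The binary entropy function `h` (base-2 logarithm; `logb 2 0 = 0` by convention,
so `h 0 = h 1 = 0`). -/
def binEnt (x : ℝ) : ℝ := -x * Real.logb 2 x - (1 - x) * Real.logb 2 (1 - x)

/-- `h̃ x = h (min x (1/2))`. -/
def htilde (x : ℝ) : ℝ := binEnt (min x (1/2))

/-- The entropy `Ent(W) = ∫₀¹∫₀¹ h(W(x,y)) dx dy` of a graphon. -/
def graphonEnt (W : ℝ → ℝ → ℝ) : ℝ :=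
  ∫ x in Set.Icc (0:ℝ) 1, ∫ y in Set.Icc (0:ℝ) 1, binEnt (W x y)

open Classical in
/-- The graphon `W_G` of a simple graph `G` on `{1, …, n}` (vertices as `Fin n`,
vertex `i : Fin n` representing `i+1`): `W_G x y = 1` iff `⌈nx⌉⌈ny⌉ ∈ E(G)`. -/
def graphonOfGraph {n : ℕ} (G : SimpleGraph (Fin n)) : ℝ → ℝ → ℝ := fun x y =>
  if ∃ i j : Fin n, G.Adj i j ∧ ⌈(n : ℝ) * x⌉ = ((i : ℕ) : ℤ) + 1 ∧
      ⌈(n : ℝ) * y⌉ = ((j : ℕ) : ℤ) + 1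
  then 1 else 0

/-- A labelled graph class: a set of graphs on `{1,…,n}` for each `n`. -/
abbrev GraphClass := ∀ n : ℕ, Set (SimpleGraph (Fin n))

/-- A graph class is closed under relabelling by permutations. -/
def IsGraphClass (Q : GraphClass) : Prop :=
  ∀ (n : ℕ) (π : Equiv.Perm (Fin n)) (G : SimpleGraph (Fin n)),
    G ∈ Q n → G.comap ⇑π ∈ Q n

/-- A hereditary graph class: a graph class closed under taking induced subgraphs
(relabelled by the order-preserving bijection). -/
def IsHereditary (Q : GraphClass) : Prop :=
  IsGraphClass Q ∧
    ∀ (m n : ℕ) (f : Fin m → Fin n), StrictMono f →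
      ∀ G ∈ Q n, G.comap f ∈ Q m

/-- `Q̂`: the set of graphons which are limits (in cut distance) of sequences of graphs in
the class `Q` whose orders tend to infinity. -/
def limitSet (Q : GraphClass) : Set (ℝ → ℝ → ℝ) :=
  { W | IsGraphon W ∧
    ∃ (nk : ℕ → ℕ) (Gk : ∀ k, SimpleGraph (Fin (nk k))),
      (∀ k, Gk k ∈ Q (nk k)) ∧ Filter.Tendsto nk Filter.atTop Filter.atTop ∧
      Filter.Tendsto (fun k => deltaCut (graphonOfGraph (Gk k)) W) Filter.atTop (nhds 0) }

/-- `C(n,2) = n(n-1)/2` as a real number. -/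
def choose2 (n : ℕ) : ℝ := (n : ℝ) * ((n : ℝ) - 1) / 2

open Classical in
/-- The step function `E[W | P]` obtained by averaging `W` over the products of the
parts of the partition `P` of `[0,1]`. -/
def condExpPart {k : ℕ} (P : Fin k → Set ℝ) (W : ℝ → ℝ → ℝ) : ℝ → ℝ → ℝ := fun x y =>
  ∑ i : Fin k, ∑ j : Fin k,
    if x ∈ P i ∧ y ∈ P j then ⨍ p in (P i) ×ˢ (P j), W p.1 p.2 else 0

/-- `W̄_n`: the step function of `W` for the partition of `[0,1]` into `n` consecutive
intervals of length `1/n`. -/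
def barStep (n : ℕ) (W : ℝ → ℝ → ℝ) : ℝ → ℝ → ℝ :=
  condExpPart (fun i : Fin n => Set.Ioc (((i : ℕ) : ℝ)/n) ((((i : ℕ) : ℝ) + 1)/n)) W

/-- `N̂_□(n, δ; W)`: the number of graphs `G` on `{1,…,n}` with `d_□(W_G, W) ≤ δ`. -/
def NhatCut (n : ℕ) (δ : ℝ) (W : ℝ → ℝ → ℝ) : ℕ :=
  Nat.card {G : SimpleGraph (Fin n) // dCut (graphonOfGraph G) W ≤ δ}

/-- `N_□(n, δ; W)`: the number of graphs `G` on `{1,…,n}` with `δ_□(W_G, W) ≤ δ`. -/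
def NCut (n : ℕ) (δ : ℝ) (W : ℝ → ℝ → ℝ) : ℕ :=
  Nat.card {G : SimpleGraph (Fin n) // deltaCut (graphonOfGraph G) W ≤ δ}

open Classical in
/-- The induced density `p(F; W)` of a graph `F` on `{1,…,k}` in a graphon `W`. -/
def inducedDensity {k : ℕ} (F : SimpleGraph (Fin k)) (W : ℝ → ℝ → ℝ) : ℝ :=
  ∫ x : Fin k → ℝ in Set.univ.pi (fun _ : Fin k => Set.Icc (0:ℝ) 1),
    ∏ i : Fin k, ∏ j : Fin k,
      if i < j then (if F.Adj i j then W (x i) (x j) else 1 - W (x i) (x j)) else 1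

open Classical in
/-- The randomness support graphon `1_{rand(W)}` of `W`. -/
def randIndicator (W : ℝ → ℝ → ℝ) : ℝ → ℝ → ℝ := fun x y =>
  if 0 < W x y ∧ W x y < 1 then 1 else 0

/-- A kernel `U` is `K_r`-free if `∏_{i<j} U(x_i, x_j) = 0` for a.e. `x ∈ [0,1]^r`. -/
def KFree (r : ℕ) (U : ℝ → ℝ → ℝ) : Prop :=
  ∀ᵐ x ∂(MeasureTheory.volume.restrict (Set.univ.pi fun _ : Fin r => Set.Icc (0:ℝ) 1)),
    (∏ i : Fin r, ∏ j : Fin r, if i < j then U (x i) (x j) else 1) = 0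

open Classical in
/-- The graphon `W^{(r,s)}`: equal to `1/2` off the diagonal blocks, `1` on the first `s`
diagonal blocks `I_i × I_i`, and `0` on the remaining diagonal blocks. -/
def Wrs (r s : ℕ) : ℝ → ℝ → ℝ := fun x y =>
  if ∃ i j : Fin r, i ≠ j ∧ x ∈ Set.Ioc (((i:ℕ):ℝ)/r) ((((i:ℕ):ℝ)+1)/r) ∧
      y ∈ Set.Ioc (((j:ℕ):ℝ)/r) ((((j:ℕ):ℝ)+1)/r)
  then 1/2
  else if ∃ i : Fin r, (i:ℕ) < s ∧ x ∈ Set.Ioc (((i:ℕ):ℝ)/r) ((((i:ℕ):ℝ)+1)/r) ∧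
      y ∈ Set.Ioc (((i:ℕ):ℝ)/r) ((((i:ℕ):ℝ)+1)/r)
  then 1 else 0

/-- `E_r = ⋃_{i ≠ j} I_i × I_j` where `I_i`, `i = 1, …, r`, are the consecutive
intervals of length `1/r` in `[0,1]`. -/
def Er (r : ℕ) : Set (ℝ × ℝ) :=
  ⋃ (i : Fin r) (j : Fin r) (_ : i ≠ j),
    (Set.Ioc (((i:ℕ):ℝ)/r) ((((i:ℕ):ℝ)+1)/r)) ×ˢ (Set.Ioc (((j:ℕ):ℝ)/r) ((((j:ℕ):ℝ)+1)/r))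

/-- `R_r`: the set of graphons equal to `1/2` on `E_r` and `{0,1}`-valued elsewhere
on `[0,1]²`. -/
def Rset (r : ℕ) : Set (ℝ → ℝ → ℝ) :=
  { W | IsGraphon W ∧ (∀ p ∈ Er r, W p.1 p.2 = 1/2) ∧
      ∀ p ∈ ((Set.Icc (0:ℝ) 1) ×ˢ (Set.Icc (0:ℝ) 1)) \ Er r,
        W p.1 p.2 = 0 ∨ W p.1 p.2 = 1 }

/-- A graphon is random-free if it is `{0,1}`-valued a.e. on `[0,1]²`. -/
def IsRandomFree (W : ℝ → ℝ → ℝ) : Prop :=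
  ∀ᵐ p ∂(MeasureTheory.volume.restrict ((Set.Icc (0:ℝ) 1) ×ˢ (Set.Icc (0:ℝ) 1))),
    W (Prod.fst p) (Prod.snd p) = 0 ∨ W (Prod.fst p) (Prod.snd p) = 1


/-! ### Entropy function -/

lemma binEnt_eq (x : ℝ) : binEnt x = Real.binEntropy x / Real.log 2 := by
  unfold binEnt Real.binEntropy Real.logb
  rw [Real.log_inv, Real.log_inv]
  ring

lemma binEntropy_subadd {y t : ℝ} (hy : 0 ≤ y) (ht : 0 ≤ t) (h1 : y + t ≤ 1) :
    Real.binEntropy (y + t) ≤ Real.binEntropy y + Real.binEntropy t := by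
  rcases eq_or_lt_of_le (add_nonneg hy ht) with h0 | h0
  · have hy0 : y = 0 := by linarith
    have ht0 : t = 0 := by linarith
    subst hy0; subst ht0; simp
  have hc := Real.strictConcave_binEntropy.concaveOn
  have key : ∀ z : ℝ, 0 ≤ z → z ≤ y + t →
      z / (y + t) * Real.binEntropy (y + t) ≤ Real.binEntropy z := by
    intro z hz hz1
    have h := hc.2 (show y + t ∈ Icc (0:ℝ) 1 from ⟨h0.le, h1⟩)
      (show (0:ℝ) ∈ Icc (0:ℝ) 1 from ⟨le_refl _, zero_le_one⟩)
      (show 0 ≤ z / (y + t) by positivity)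
      (show 0 ≤ 1 - z / (y + t) by rw [sub_nonneg, div_le_one h0]; exact hz1) (by ring)
    simp only [smul_eq_mul, Real.binEntropy_zero, mul_zero, add_zero] at h
    rwa [div_mul_cancel₀ _ h0.ne'] at h
  have h1 := key y hy (by linarith)
  have h2 := key t ht (by linarith)
  have : y / (y + t) * Real.binEntropy (y + t) + t / (y + t) * Real.binEntropy (y + t)
      = Real.binEntropy (y + t) := by
    field_simp
  linarith

lemma binEntropy_le_add {x y d : ℝ} (hx : x ∈ Icc (0:ℝ) 1) (hy : y ∈ Icc (0:ℝ) 1)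
    (hd : |x - y| ≤ d) :
    Real.binEntropy x ≤ Real.binEntropy y + Real.binEntropy (min d (1/2)) := by
  have hy0 := Real.binEntropy_nonneg hy.1 hy.2
  rcases le_total (1/2) d with h | h
  · rw [min_eq_right h, one_div, Real.binEntropy_two_inv]
    have := @Real.binEntropy_le_log_two x
    linarith
  · rw [min_eq_left h]
    have ha := abs_nonneg (x - y)
    have hm : Real.binEntropy |x - y| ≤ Real.binEntropy d := by
      apply Real.binEntropy_strictMonoOn.monotoneOn _ _ hd
      · constructor <;> linarith [abs_nonneg (x - y)]
      · constructor <;> linarith [abs_nonneg (x - y)]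
    refine le_trans ?_ (add_le_add_right hm _)
    rcases le_total y x with hxy | hxy
    · rw [abs_of_nonneg (by linarith)]
      have := binEntropy_subadd hy.1 (t := x - y) (by linarith) (by linarith [hx.2])
      simpa using this
    · rw [abs_of_nonpos (by linarith)]
      have := binEntropy_subadd (y := 1 - y) (by linarith [hy.2]) (t := -(x - y)) (by linarith)
        (by linarith [hx.1])
      have e : 1 - y + -(x - y) = 1 - x := by ring
      rw [e, Real.binEntropy_one_sub, Real.binEntropy_one_sub] at this
      exact this

/-! ### Counting -/

open Classical in
/-- Number of ordered adjacent pairs between colour classes. -/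
def eCount {n k : ℕ} (col : Fin n → Fin k) (G : SimpleGraph (Fin n)) (i j : Fin k) : ℕ :=
  (Finset.univ.filter (fun p : Fin n × Fin n =>
    (col p.1 = i ∧ col p.2 = j) ∧ G.Adj p.1 p.2)).card

/-- Number of ordered pairs between colour classes. -/
def pCount {n k : ℕ} (col : Fin n → Fin k) (i j : Fin k) : ℕ :=
  (Finset.univ.filter (fun p : Fin n × Fin n => col p.1 = i ∧ col p.2 = j)).card

/-- Edge density between colour classes. -/
def eDens {n k : ℕ} (col : Fin n → Fin k) (M : Fin k → Fin k → ℕ) (i j : Fin k) : ℝ :=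
  (M i j : ℝ) / pCount col i j

lemma eCount_le {n k : ℕ} (col : Fin n → Fin k) (G : SimpleGraph (Fin n)) (i j : Fin k) :
    eCount col G i j ≤ pCount col i j := by
  classical
  unfold eCount pCount
  apply Finset.card_le_card
  intro p hp
  simp only [Finset.mem_filter] at hp ⊢
  exact ⟨hp.1, hp.2.1⟩

lemma eCount_symm {n k : ℕ} (col : Fin n → Fin k) (G : SimpleGraph (Fin n)) (i j : Fin k) :
    eCount col G i j = eCount col G j i := by
  classical
  unfold eCount
  apply Finset.card_bij (fun p _ => p.swap)
  · intro p hp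
    simp only [Finset.mem_filter, Finset.mem_univ, true_and, Prod.fst_swap, Prod.snd_swap] at hp ⊢
    exact ⟨⟨hp.1.2, hp.1.1⟩, hp.2.symm⟩
  · intro p _ q _ h
    exact Prod.swap_injective h
  · intro p hp
    refine ⟨p.swap, ?_, Prod.swap_swap p⟩
    simp only [Finset.mem_filter, Finset.mem_univ, true_and, Prod.fst_swap, Prod.snd_swap] at hp ⊢
    exact ⟨⟨hp.1.2, hp.1.1⟩, hp.2.symm⟩

lemma pCount_symm {n k : ℕ} (col : Fin n → Fin k) (i j : Fin k) :
    pCount col i j = pCount col j i := by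
  classical
  unfold pCount
  apply Finset.card_bij (fun p _ => p.swap)
  · intro p hp
    simp only [Finset.mem_filter, Finset.mem_univ, true_and, Prod.fst_swap, Prod.snd_swap] at hp ⊢
    exact hp.symm
  · intro p _ q _ h
    exact Prod.swap_injective h
  · intro p hp
    refine ⟨p.swap, ?_, Prod.swap_swap p⟩
    simp only [Finset.mem_filter, Finset.mem_univ, true_and, Prod.fst_swap, Prod.snd_swap] at hp ⊢
    exact hp.symm

lemma eDens_symm {n k : ℕ} (col : Fin n → Fin k) (G : SimpleGraph (Fin n)) (i j : Fin k) :
    eDens col (eCount col G) i j = eDens col (eCount col G) j i := by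
  unfold eDens
  rw [eCount_symm, pCount_symm]

lemma eDens_mem {n k : ℕ} (col : Fin n → Fin k) (G : SimpleGraph (Fin n)) (i j : Fin k) :
    eDens col (eCount col G) i j ∈ Icc (0:ℝ) 1 := by
  unfold eDens
  refine ⟨by positivity, ?_⟩
  apply div_le_one_of_le₀ _ (by positivity)
  exact_mod_cast eCount_le col G i j

lemma eCount_lt {n k : ℕ} (hn : 1 ≤ n) (col : Fin n → Fin k) (G : SimpleGraph (Fin n))
    (i j : Fin k) : eCount col G i j < n ^ 2 := by
  classical
  have h : eCount col G i j < (Finset.univ : Finset (Fin n × Fin n)).card := by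
    unfold eCount
    apply Finset.card_lt_card
    rw [Finset.ssubset_univ_iff]
    intro h
    have : ((⟨0, hn⟩, ⟨0, hn⟩) : Fin n × Fin n) ∈ (Finset.univ : Finset (Fin n × Fin n)) :=
      Finset.mem_univ _
    rw [← h] at this
    simp at this
  simpa [sq] using h

lemma eDens_pos {n k : ℕ} (col : Fin n → Fin k) (G : SimpleGraph (Fin n)) {u v : Fin n}
    (h : G.Adj u v) : 0 < eDens col (eCount col G) (col u) (col v) := by
  classical
  have h1 : 0 < eCount col G (col u) (col v) := by
    unfold eCount
    rw [Finset.card_pos]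
    exact ⟨(u, v), by simp [h]⟩
  have h2 := eCount_le col G (col u) (col v)
  unfold eDens
  have h3 : 0 < pCount col (col u) (col v) := by omega
  positivity

lemma eDens_lt {n k : ℕ} (col : Fin n → Fin k) (G : SimpleGraph (Fin n)) {u v : Fin n}
    (h : ¬ G.Adj u v) : eDens col (eCount col G) (col u) (col v) < 1 := by
  classical
  have h1 : eCount col G (col u) (col v) < pCount col (col u) (col v) := by
    unfold eCount pCount
    apply Finset.card_lt_card
    rw [Finset.ssubset_iff_of_subset]
    · exact ⟨(u, v), by simp, by simp [h]⟩
    · intro p hp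
      simp only [Finset.mem_filter] at hp ⊢
      exact ⟨hp.1, hp.2.1⟩
  unfold eDens
  rw [div_lt_one (by exact_mod_cast (by omega : 0 < pCount col (col u) (col v)))]
  exact_mod_cast h1

/-- The total log-weight over all ordered pairs. -/
lemma sum_log_eq {n k : ℕ} (col : Fin n → Fin k) (G : SimpleGraph (Fin n))
    [DecidableRel G.Adj] :
    ∑ p : Fin n × Fin n, Real.log (if G.Adj p.1 p.2
        then eDens col (eCount col G) (col p.1) (col p.2)
        else 1 - eDens col (eCount col G) (col p.1) (col p.2)) =
      - ∑ p : Fin n × Fin n, Real.binEntropy (eDens col (eCount col G) (col p.1) (col p.2)) := by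
  classical
  rw [← Finset.sum_neg_distrib,
    ← Finset.sum_fiberwise (s := Finset.univ) (g := fun p : Fin n × Fin n => (col p.1, col p.2)),
    ← Finset.sum_fiberwise (s := Finset.univ) (g := fun p : Fin n × Fin n => (col p.1, col p.2))]
  apply Finset.sum_congr rfl
  rintro ⟨i, j⟩ -
  set x := eDens col (eCount col G) i j with hx
  have hL : ∑ p : Fin n × Fin n with (col p.1, col p.2) = (i, j),
      Real.log (if G.Adj p.1 p.2
        then eDens col (eCount col G) (col p.1) (col p.2)
        else 1 - eDens col (eCount col G) (col p.1) (col p.2)) =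
      ∑ p : Fin n × Fin n with (col p.1, col p.2) = (i, j),
        (Real.log (1 - x) + if G.Adj p.1 p.2 then Real.log x - Real.log (1 - x) else 0) := by
    apply Finset.sum_congr rfl
    intro p hp
    simp only [Finset.mem_filter, Finset.mem_univ, true_and, Prod.mk.injEq] at hp
    rw [hp.1, hp.2, ← hx]
    split_ifs <;> ring
  have hR : ∑ p : Fin n × Fin n with (col p.1, col p.2) = (i, j),
      -Real.binEntropy (eDens col (eCount col G) (col p.1) (col p.2)) =
      ∑ p : Fin n × Fin n with (col p.1, col p.2) = (i, j), -Real.binEntropy x := by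
    apply Finset.sum_congr rfl
    intro p hp
    simp only [Finset.mem_filter, Finset.mem_univ, true_and, Prod.mk.injEq] at hp
    rw [hp.1, hp.2, ← hx]
  rw [hL, hR, Finset.sum_add_distrib, ← Finset.sum_filter, Finset.sum_const, Finset.sum_const,
    Finset.sum_const, Finset.filter_filter]
  have c1 : (Finset.univ.filter (fun p : Fin n × Fin n => (col p.1, col p.2) = (i, j))).card
      = pCount col i j := by
    unfold pCount
    simp only [Prod.mk.injEq]
  have c2 : (Finset.univ.filter (fun p : Fin n × Fin n =>
      (col p.1, col p.2) = (i, j) ∧ G.Adj p.1 p.2)).card = eCount col G i j := by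
    unfold eCount
    simp only [Prod.mk.injEq]
    congr
  rw [c1, c2]
  simp only [nsmul_eq_mul]
  have hm : (eCount col G i j : ℝ) = pCount col i j * x := by
    rw [hx]; unfold eDens
    rcases Nat.eq_zero_or_pos (pCount col i j) with h | h
    · have := eCount_le col G i j
      have h0 : eCount col G i j = 0 := by omega
      rw [h, h0]; simp
    · field_simp
  rw [hm, Real.binEntropy, Real.log_inv, Real.log_inv]
  ring

/-- The set of pairs `u < v`. -/
def upPairs (n : ℕ) : Finset (Fin n × Fin n) := Finset.univ.filter (fun p => p.1 < p.2)

lemma sum_symm_le {n : ℕ} (f : Fin n × Fin n → ℝ) (hs : ∀ p, f p.swap = f p)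
    (hd : ∀ u, f (u, u) ≤ 0) : ∑ p, f p ≤ 2 * ∑ p ∈ upPairs n, f p := by
  classical
  have h1 : ∑ p, f p = ∑ p ∈ upPairs n, f p +
      ∑ p ∈ Finset.univ.filter (fun p : Fin n × Fin n => ¬ p.1 < p.2), f p := by
    unfold upPairs
    rw [Finset.sum_filter_add_sum_filter_not]
  have h2 : ∑ p ∈ Finset.univ.filter (fun p : Fin n × Fin n => ¬ p.1 < p.2), f p =
      ∑ p ∈ Finset.univ.filter (fun p : Fin n × Fin n => p.2 < p.1), f p +
      ∑ p ∈ Finset.univ.filter (fun p : Fin n × Fin n => p.1 = p.2), f p := by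
    rw [← Finset.sum_union]
    · congr 1
      ext p
      simp only [Finset.mem_filter, Finset.mem_univ, true_and, Finset.mem_union, not_lt]
      rw [le_iff_lt_or_eq]
      tauto
    · rw [Finset.disjoint_filter]
      intro p _ h h'
      exact h.ne h'.symm
  have h3 : ∑ p ∈ Finset.univ.filter (fun p : Fin n × Fin n => p.2 < p.1), f p =
      ∑ p ∈ upPairs n, f p := by
    unfold upPairs
    apply Finset.sum_bij (fun p _ => p.swap)
    · intro p hp
      simpa using hp
    · intro p _ q _ h
      exact Prod.swap_injective h
    · intro p hp
      exact ⟨p.swap, by simpa using hp, Prod.swap_swap p⟩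
    · intro p _
      exact (hs p).symm
  have h4 : ∑ p ∈ Finset.univ.filter (fun p : Fin n × Fin n => p.1 = p.2), f p ≤ 0 := by
    apply Finset.sum_nonpos
    rintro ⟨u, v⟩ hp
    simp only [Finset.mem_filter, Finset.mem_univ, true_and] at hp
    subst hp
    exact hd u
  linarith

open Classical in
/-- Weight of a graph in the independent-edges model. -/
def gWeight {n : ℕ} (q : Fin n × Fin n → ℝ) (G : SimpleGraph (Fin n)) : ℝ :=
  ∏ p ∈ upPairs n, if G.Adj p.1 p.2 then q p else 1 - q p

lemma sum_gWeight_le {n : ℕ} (q : Fin n × Fin n → ℝ) (h0 : ∀ p, 0 ≤ q p) (h1 : ∀ p, q p ≤ 1)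
    (s : Finset (SimpleGraph (Fin n))) : ∑ G ∈ s, gWeight q G ≤ 1 := by
  classical
  have hone : ∑ t ∈ (upPairs n).powerset, (∏ p ∈ t, q p) * ∏ p ∈ upPairs n \ t, (1 - q p) = 1 := by
    rw [← Finset.prod_add]
    simp
  rw [← hone]
  let F : SimpleGraph (Fin n) → Finset (Fin n × Fin n) := fun G =>
    (upPairs n).filter (fun p => G.Adj p.1 p.2)
  have hinj : Function.Injective F := by
    intro G H h
    have key : ∀ u v, u < v → (G.Adj u v ↔ H.Adj u v) := by
      intro u v huv
      have := Finset.ext_iff.1 h (u, v)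
      simpa [F, upPairs, huv] using this
    ext u v
    rcases lt_trichotomy u v with huv | huv | huv
    · exact key u v huv
    · subst huv; simp
    · rw [G.adj_comm, H.adj_comm]; exact key v u huv
  have heq : ∀ G, gWeight q G = (∏ p ∈ F G, q p) * ∏ p ∈ upPairs n \ F G, (1 - q p) := by
    intro G
    unfold gWeight
    rw [Finset.prod_ite]
    congr 1
    apply Finset.prod_congr _ (fun _ _ => rfl)
    ext p
    simp [F]
    tauto
  rw [Finset.sum_congr rfl (fun G _ => heq G),
    ← Finset.sum_image (g := F)
      (f := fun t => (∏ p ∈ t, q p) * ∏ p ∈ upPairs n \ t, (1 - q p)) (fun a _ b _ h => hinj h)]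
  apply Finset.sum_le_sum_of_subset_of_nonneg
  · intro t ht
    rw [Finset.mem_image] at ht
    obtain ⟨G, _, rfl⟩ := ht
    rw [Finset.mem_powerset]
    exact Finset.filter_subset _ _
  · intro t _ _
    exact mul_nonneg (Finset.prod_nonneg fun p _ => h0 p)
      (Finset.prod_nonneg fun p _ => by linarith [h1 p])

/-- Entropy bound for the number of graphs with a prescribed block edge count matrix. -/
lemma card_fiber_le {n k : ℕ} (col : Fin n → Fin k) (M : Fin k → Fin k → ℕ)
    (s : Finset (SimpleGraph (Fin n))) (hs : ∀ G ∈ s, eCount col G = M) :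
    (s.card : ℝ) ≤ Real.exp ((1/2) *
      ∑ p : Fin n × Fin n, Real.binEntropy (eDens col M (col p.1) (col p.2))) := by
  classical
  rcases s.eq_empty_or_nonempty with rfl | ⟨G₀, hG₀⟩
  · simp; positivity
  set q : Fin n × Fin n → ℝ := fun p => eDens col M (col p.1) (col p.2) with hq
  set B := (1/2) * ∑ p : Fin n × Fin n, Real.binEntropy (q p) with hB
  have hM := hs G₀ hG₀
  have hmem : ∀ p, q p ∈ Icc (0:ℝ) 1 := by
    intro p
    simp only [hq, ← hM]
    exact eDens_mem _ _ _ _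
  have hw : ∀ G ∈ s, Real.exp (-B) ≤ gWeight q G := by
    intro G hG
    have hGM := hs G hG
    have hpos : ∀ p : Fin n × Fin n, 0 < (if G.Adj p.1 p.2 then q p else 1 - q p) := by
      intro p
      split_ifs with h
      · simp only [hq, ← hGM]; exact eDens_pos col G h
      · have := eDens_lt col G h
        simp only [hq, ← hGM]; linarith
    have hgpos : 0 < gWeight q G := Finset.prod_pos fun p _ => hpos p
    rw [← Real.exp_log hgpos, Real.exp_le_exp]
    have hlog : Real.log (gWeight q G) =
        ∑ p ∈ upPairs n, Real.log (if G.Adj p.1 p.2 then q p else 1 - q p) := by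
      unfold gWeight
      exact Real.log_prod fun p _ => (hpos p).ne'
    have h2 := sum_log_eq col G
    rw [hGM] at h2
    have h3 := sum_symm_le (fun p => Real.log (if G.Adj p.1 p.2 then q p else 1 - q p))
      (by
        intro p
        have : q p.swap = q p := by
          simp only [hq, ← hM, Prod.fst_swap, Prod.snd_swap]
          exact eDens_symm _ _ _ _
        simp only [this, Prod.fst_swap, Prod.snd_swap, G.adj_comm])
      (by
        intro u
        simp only [SimpleGraph.irrefl, if_false]
        apply Real.log_nonpos <;> linarith [(hmem (u, u)).1, (hmem (u, u)).2])
    rw [hlog, hB]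
    simp only [hq] at h3 ⊢
    linarith
  have h1 := sum_gWeight_le q (fun p => (hmem p).1) (fun p => (hmem p).2) s
  have h2 : (s.card : ℝ) * Real.exp (-B) ≤ 1 := by
    refine le_trans ?_ h1
    rw [← nsmul_eq_mul]
    exact Finset.card_nsmul_le_sum s _ _ hw
  rw [Real.exp_neg] at h2
  have := Real.exp_pos B
  rwa [← div_eq_mul_inv, div_le_one this] at h2

lemma card_le_of_bound {n k : ℕ} (hn : 1 ≤ n) (col : Fin n → Fin k) (B : ℝ)
    (s : Finset (SimpleGraph (Fin n)))
    (hs : ∀ G ∈ s, (1/2) * ∑ p : Fin n × Fin n,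
      Real.binEntropy (eDens col (eCount col G) (col p.1) (col p.2)) ≤ B) :
    (s.card : ℝ) ≤ Real.exp B * (n : ℝ) ^ (2 * k ^ 2) := by
  classical
  let t : Finset (Fin k → Fin k → ℕ) :=
    Fintype.piFinset fun _ => Fintype.piFinset fun _ => Finset.range (n ^ 2)
  have ht : t.card = n ^ (2 * k ^ 2) := by
    simp only [t, Fintype.card_piFinset, Finset.card_range, Finset.prod_const, Finset.card_univ,
      Fintype.card_fin]
    rw [← pow_mul, ← pow_mul]
    congr 1
    ring
  have h := Finset.card_le_mul_card_image_of_maps_to (s := s) (t := t) (f := eCount col)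
    (fun G _ => by
      simp only [t, Fintype.mem_piFinset, Finset.mem_range]
      exact fun i j => eCount_lt hn col G i j) ⌊Real.exp B⌋₊ (by
    intro M _
    rw [Nat.le_floor_iff (Real.exp_pos B).le]
    rcases (s.filter (fun G => eCount col G = M)).eq_empty_or_nonempty with h | ⟨G, hG⟩
    · rw [h]; simp; positivity
    · refine (card_fiber_le col M _ (fun G hG => (Finset.mem_filter.1 hG).2)).trans ?_
      rw [Finset.mem_filter] at hG
      rw [Real.exp_le_exp, ← hG.2]
      exact hs G hG.1)
  rw [ht] at h
  have h' : (s.card : ℝ) ≤ (⌊Real.exp B⌋₊ : ℝ) * (n : ℝ) ^ (2 * k ^ 2) := by exact_mod_cast h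
  refine h'.trans ?_
  gcongr
  exact Nat.floor_le (Real.exp_pos B).le

/-! ### Step functions -/

/-- The interval `(u/n, (u+1)/n]`. -/
def cellI (n : ℕ) (u : Fin n) : Set ℝ := Set.Ioc (((u:ℕ):ℝ)/n) ((((u:ℕ):ℝ)+1)/n)

lemma mem_cellI {n : ℕ} (u : Fin n) (x : ℝ) :
    x ∈ cellI n u ↔ ⌈(n : ℝ) * x⌉ = ((u : ℕ) : ℤ) + 1 := by
  have hn : (0:ℝ) < n := by exact_mod_cast u.pos
  unfold cellI
  rw [Int.ceil_eq_iff, Set.mem_Ioc, div_lt_iff₀ hn, le_div_iff₀ hn]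
  push_cast
  rw [mul_comm x]
  simp

lemma cellI_unique {n : ℕ} {u v : Fin n} {x : ℝ} (hu : x ∈ cellI n u) (hv : x ∈ cellI n v) :
    u = v := by
  rw [mem_cellI] at hu hv
  rw [hu] at hv
  apply Fin.ext
  omega

lemma measurableSet_cellI {n : ℕ} (u : Fin n) : MeasurableSet (cellI n u) := measurableSet_Ioc

lemma volume_cellI {n : ℕ} (u : Fin n) : volume.real (cellI n u) = 1 / n := by
  have hn : (0:ℝ) < n := by exact_mod_cast u.pos
  unfold cellI
  rw [Real.volume_real_Ioc_of_le]
  · ring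
  · gcongr; linarith

lemma cellI_subset {n : ℕ} (u : Fin n) : cellI n u ⊆ Ioc 0 1 := by
  have hn : (0:ℝ) < n := by exact_mod_cast u.pos
  intro x hx
  have hu : ((u:ℕ):ℝ) + 1 ≤ n := by exact_mod_cast u.isLt
  refine ⟨lt_of_le_of_lt (by positivity) hx.1, hx.2.trans ?_⟩
  rw [div_le_one hn]
  exact hu

lemma iUnion_cellI {n : ℕ} (hn1 : 1 ≤ n) : ⋃ u ∈ (Finset.univ : Finset (Fin n)), cellI n u
    = Ioc (0:ℝ) 1 := by
  have hn : (0:ℝ) < n := by exact_mod_cast hn1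
  apply Set.Subset.antisymm
  · simp only [Set.iUnion_subset_iff]
    exact fun u _ => cellI_subset u
  · intro x hx
    have h1 : 0 < ⌈(n:ℝ) * x⌉ := Int.ceil_pos.2 (mul_pos hn hx.1)
    have h2 : ⌈(n:ℝ) * x⌉ ≤ n := by
      rw [Int.ceil_le]
      push_cast
      nlinarith [hx.2]
    simp only [Set.mem_iUnion]
    refine ⟨⟨(⌈(n:ℝ) * x⌉ - 1).toNat, by omega⟩, Finset.mem_univ _, ?_⟩
    rw [mem_cellI]
    simp only
    omega

lemma integral_step {n : ℕ} (hn : 1 ≤ n) (g : ℝ → ℝ) (c : Fin n → ℝ)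
    (h : ∀ u, ∀ x ∈ cellI n u, g x = c u) :
    ∫ x in Icc (0:ℝ) 1, g x = ∑ u, c u / n := by
  rw [integral_Icc_eq_integral_Ioc, ← iUnion_cellI hn, integral_biUnion_finset]
  · apply Finset.sum_congr rfl
    intro u _
    rw [setIntegral_congr_fun (measurableSet_cellI u) (h u), setIntegral_const, volume_cellI]
    simp only [smul_eq_mul]
    ring
  · exact fun u _ => measurableSet_cellI u
  · intro u _ v _ huv
    rw [Function.onFun, Set.disjoint_left]
    exact fun x hu hv => huv (cellI_unique hu hv)
  · intro u _
    have : IntegrableOn (fun _ : ℝ => c u) (cellI n u) :=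
      integrableOn_const (by unfold cellI; simp)
    exact this.congr_fun (fun x hx => (h u x hx).symm) (measurableSet_cellI u)

/-- The product cell. -/
def cellP (n : ℕ) (p : Fin n × Fin n) : Set (ℝ × ℝ) := cellI n p.1 ×ˢ cellI n p.2

lemma measurableSet_cellP {n : ℕ} (p : Fin n × Fin n) : MeasurableSet (cellP n p) :=
  (measurableSet_cellI _).prod (measurableSet_cellI _)

lemma volume_cellP {n : ℕ} (p : Fin n × Fin n) : volume.real (cellP n p) = 1 / (n:ℝ) ^ 2 := by
  unfold cellP
  rw [Measure.volume_eq_prod, measureReal_prod_prod, volume_cellI, volume_cellI]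
  ring

lemma volume_cellP_ne_top {n : ℕ} (p : Fin n × Fin n) : volume (cellP n p) ≠ ⊤ := by
  unfold cellP cellI
  rw [Measure.volume_eq_prod, Measure.prod_prod]
  simp [ENNReal.mul_eq_top]

lemma cellP_disj {n : ℕ} (s : Set (Fin n × Fin n)) : s.Pairwise (Function.onFun Disjoint (cellP n)) := by
  intro p _ q _ hpq
  rw [Function.onFun, Set.disjoint_left]
  intro x hx hy
  exact hpq (Prod.ext (cellI_unique hx.1 hy.1) (cellI_unique hx.2 hy.2))

lemma integrableOn_cells {n : ℕ} (s : Finset (Fin n × Fin n)) (f : ℝ × ℝ → ℝ)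
    (c : Fin n × Fin n → ℝ) (h : ∀ p, ∀ x ∈ cellP n p, f x = c p) :
    IntegrableOn f (⋃ p ∈ s, cellP n p) := by
  rw [integrableOn_finset_iUnion]
  intro p _
  have : IntegrableOn (fun _ : ℝ × ℝ => c p) (cellP n p) :=
    integrableOn_const (volume_cellP_ne_top p)
  exact this.congr_fun (fun x hx => (h p x hx).symm) (measurableSet_cellP p)

lemma integral_cells {n : ℕ} (s : Finset (Fin n × Fin n)) (f : ℝ × ℝ → ℝ)
    (c : Fin n × Fin n → ℝ) (h : ∀ p, ∀ x ∈ cellP n p, f x = c p) :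
    ∫ x in ⋃ p ∈ s, cellP n p, f x = (∑ p ∈ s, c p) / (n:ℝ) ^ 2 := by
  have hi := integrableOn_cells s f c h
  rw [integrableOn_finset_iUnion] at hi
  rw [integral_biUnion_finset s (fun p _ => measurableSet_cellP p) (cellP_disj _) hi,
    Finset.sum_div]
  apply Finset.sum_congr rfl
  intro p _
  rw [setIntegral_congr_fun (measurableSet_cellP p) (h p), setIntegral_const, volume_cellP]
  simp only [smul_eq_mul]
  ring

open Classical in
lemma graphonOfGraph_cell {n : ℕ} (G : SimpleGraph (Fin n)) (p : Fin n × Fin n) :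
    ∀ x ∈ cellP n p, graphonOfGraph G x.1 x.2 = if G.Adj p.1 p.2 then 1 else 0 := by
  intro x hx
  unfold graphonOfGraph
  congr 1
  rw [eq_iff_iff]
  constructor
  · rintro ⟨i, j, hij, hi, hj⟩
    rw [← mem_cellI] at hi hj
    rw [cellI_unique hx.1 hi, cellI_unique hx.2 hj]
    exact hij
  · intro h
    exact ⟨p.1, p.2, h, (mem_cellI _ _).1 hx.1, (mem_cellI _ _).1 hx.2⟩

lemma abs_graphon_sub_le {n : ℕ} (G : SimpleGraph (Fin n)) {W : ℝ → ℝ → ℝ} (hW : IsGraphon W)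
    (x y : ℝ) : |graphonOfGraph G x y - W x y| ≤ 1 := by
  have h1 := hW.2.2 x y
  have h2 : 0 ≤ graphonOfGraph G x y ∧ graphonOfGraph G x y ≤ 1 := by
    unfold graphonOfGraph
    split_ifs <;> norm_num
  rw [abs_le]
  constructor <;> linarith [h1.1, h1.2, h2.1, h2.2]

lemma le_dCut {n : ℕ} (G : SimpleGraph (Fin n)) {W : ℝ → ℝ → ℝ} (hW : IsGraphon W)
    {S T : Set ℝ} (hS : MeasurableSet S) (hT : MeasurableSet T) (hS1 : S ⊆ Icc 0 1)
    (hT1 : T ⊆ Icc 0 1) :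
    |∫ p in S ×ˢ T, (graphonOfGraph G p.1 p.2 - W p.1 p.2)| ≤ dCut (graphonOfGraph G) W := by
  unfold dCut cutNorm
  apply le_csSup
  · refine ⟨1, ?_⟩
    rintro r ⟨S, T, -, -, hS, hT, rfl⟩
    have hv : volume (S ×ˢ T) ≤ 1 := by
      calc volume (S ×ˢ T) ≤ volume ((Icc (0:ℝ) 1) ×ˢ (Icc (0:ℝ) 1)) :=
            measure_mono (Set.prod_mono hS hT)
        _ = 1 := by
          rw [Measure.volume_eq_prod, Measure.prod_prod]; simp
    have h := norm_setIntegral_le_of_norm_le_const (μ := volume) (s := S ×ˢ T) (C := 1)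
      (f := fun p : ℝ × ℝ => graphonOfGraph G p.1 p.2 - W p.1 p.2)
      (lt_of_le_of_lt hv ENNReal.one_lt_top)
      (fun p _ => abs_graphon_sub_le G hW p.1 p.2)
    rw [Real.norm_eq_abs, one_mul] at h
    refine h.trans ?_
    rw [Measure.real]
    exact ENNReal.toReal_le_of_le_ofReal zero_le_one (by simpa using hv)
  · exact ⟨S, T, hS, hT, hS1, hT1, rfl⟩

/-- The part of `[0,1]` of a colour class. -/
def partI {n k : ℕ} (V : Fin k → Finset (Fin n)) (i : Fin k) : Set ℝ := ⋃ j ∈ V i, cellI n j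

lemma measurableSet_partI {n k : ℕ} (V : Fin k → Finset (Fin n)) (i : Fin k) :
    MeasurableSet (partI V i) :=
  Finset.measurableSet_biUnion _ fun u _ => measurableSet_cellI u

lemma partI_subset {n k : ℕ} (V : Fin k → Finset (Fin n)) (i : Fin k) :
    partI V i ⊆ Ioc 0 1 := by
  unfold partI
  simp only [Set.iUnion_subset_iff]
  exact fun u _ => cellI_subset u

lemma partI_prod {n k : ℕ} (V : Fin k → Finset (Fin n)) (i j : Fin k) :
    partI V i ×ˢ partI V j = ⋃ p ∈ V i ×ˢ V j, cellP n p := by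
  ext x
  simp only [partI, cellP, Set.mem_prod, Set.mem_iUnion, Finset.mem_product, exists_prop,
    Prod.exists]
  constructor
  · rintro ⟨⟨u, hu, hxu⟩, ⟨v, hv, hxv⟩⟩
    exact ⟨u, v, ⟨hu, hv⟩, hxu, hxv⟩
  · rintro ⟨u, v, ⟨hu, hv⟩, hxu, hxv⟩
    exact ⟨⟨u, hu, hxu⟩, ⟨v, hv, hxv⟩⟩

lemma mem_partI {n k : ℕ} (V : Fin k → Finset (Fin n)) {i : Fin k} {u : Fin n} {x : ℝ}
    (hx : x ∈ cellI n u) : x ∈ partI V i ↔ u ∈ V i := by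
  simp only [partI, Set.mem_iUnion, exists_prop]
  constructor
  · rintro ⟨v, hv, hxv⟩
    rwa [cellI_unique hx hxv]
  · intro h
    exact ⟨u, h, hx⟩

lemma pCount_eq {n k : ℕ} (V : Fin k → Finset (Fin n)) (col : Fin n → Fin k)
    (hcol : ∀ u i, u ∈ V i ↔ col u = i) (i j : Fin k) :
    pCount col i j = (V i).card * (V j).card := by
  unfold pCount
  rw [← Finset.card_product]
  congr 1
  ext p
  simp [hcol]

lemma integrableOn_graphon {W : ℝ → ℝ → ℝ} (hW : IsGraphon W) {s : Set (ℝ × ℝ)}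
    (hs : volume s ≠ ⊤) : IntegrableOn (fun p : ℝ × ℝ => W p.1 p.2) s := by
  apply Measure.integrableOn_of_bounded hs (M := 1)
  · exact hW.2.1.aestronglyMeasurable
  · refine Eventually.of_forall fun p => ?_
    have := hW.2.2 p.1 p.2
    rw [Real.norm_eq_abs, abs_le]
    constructor <;> linarith [this.1, this.2]

lemma volume_part {n k : ℕ} (V : Fin k → Finset (Fin n)) (i j : Fin k) :
    volume.real (partI V i ×ˢ partI V j) = ((V i).card * (V j).card : ℝ) / (n:ℝ) ^ 2 := by
  have h := integral_cells (V i ×ˢ V j) (fun _ => 1) (fun _ => 1) (fun _ _ _ => rfl)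
  rw [← partI_prod, setIntegral_const] at h
  simpa using h

lemma volume_part_ne_top {n k : ℕ} (V : Fin k → Finset (Fin n)) (i j : Fin k) :
    volume (partI V i ×ˢ partI V j) ≠ ⊤ := by
  have h : volume (partI V i ×ˢ partI V j) ≤ volume ((Icc (0:ℝ) 1) ×ˢ (Icc (0:ℝ) 1)) :=
    measure_mono (Set.prod_mono ((partI_subset V i).trans Ioc_subset_Icc_self)
      ((partI_subset V j).trans Ioc_subset_Icc_self))
  refine ne_top_of_le_ne_top ?_ h
  rw [Measure.volume_eq_prod, Measure.prod_prod]; simp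

/-- Block averages. -/
def blkAvg {n k : ℕ} (V : Fin k → Finset (Fin n)) (W : ℝ → ℝ → ℝ) (i j : Fin k) : ℝ :=
  ⨍ p in (partI V i) ×ˢ (partI V j), W p.1 p.2

lemma blkAvg_mem {n k : ℕ} (V : Fin k → Finset (Fin n)) {W : ℝ → ℝ → ℝ} (hW : IsGraphon W)
    (i j : Fin k) : blkAvg V W i j ∈ Icc (0:ℝ) 1 := by
  unfold blkAvg
  rw [setAverage_eq, smul_eq_mul]
  have h0 : 0 ≤ ∫ p in (partI V i) ×ˢ (partI V j), W p.1 p.2 :=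
    integral_nonneg fun p => (hW.2.2 p.1 p.2).1
  refine ⟨by positivity, ?_⟩
  have h := norm_setIntegral_le_of_norm_le_const (μ := volume)
    (s := (partI V i) ×ˢ (partI V j)) (C := 1) (f := fun p : ℝ × ℝ => W p.1 p.2)
    (lt_top_iff_ne_top.2 (volume_part_ne_top V i j))
    (fun p _ => by
      have := hW.2.2 p.1 p.2
      rw [Real.norm_eq_abs, abs_le]
      constructor <;> linarith [this.1, this.2])
  rw [Real.norm_of_nonneg h0, one_mul] at h
  rw [inv_mul_eq_div]
  exact div_le_one_of_le₀ h measureReal_nonneg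

lemma dens_close {n k : ℕ} {W : ℝ → ℝ → ℝ} (hW : IsGraphon W) (hk : 1 ≤ k) {δ : ℝ}
    (V : Fin k → Finset (Fin n)) (col : Fin n → Fin k)
    (hcol : ∀ u i, u ∈ V i ↔ col u = i) (hn : 1 ≤ n)
    (hV : ∀ i, n ≤ 2 * k * (V i).card) (G : SimpleGraph (Fin n))
    (hG : dCut (graphonOfGraph G) W ≤ δ) (i j : Fin k) :
    |eDens col (eCount col G) i j - blkAvg V W i j| ≤ 4 * (k:ℝ) ^ 2 * δ := by
  classical
  have hn' : (0:ℝ) < n := by exact_mod_cast hn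
  have hk' : (0:ℝ) < k := by exact_mod_cast hk
  have h := (le_dCut G hW (measurableSet_partI V i) (measurableSet_partI V j)
    ((partI_subset V i).trans Ioc_subset_Icc_self)
    ((partI_subset V j).trans Ioc_subset_Icc_self)).trans hG
  have hδ : 0 ≤ δ := (abs_nonneg _).trans h
  have hGi : IntegrableOn (fun p : ℝ × ℝ => graphonOfGraph G p.1 p.2)
      (partI V i ×ˢ partI V j) := by
    rw [partI_prod]
    exact integrableOn_cells _ _ _ (graphonOfGraph_cell G)
  rw [integral_sub hGi (integrableOn_graphon hW (volume_part_ne_top V i j))] at h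
  have hGint : ∫ p in partI V i ×ˢ partI V j, graphonOfGraph G p.1 p.2
      = (eCount col G i j : ℝ) / (n:ℝ) ^ 2 := by
    rw [partI_prod, integral_cells _ _ _ (graphonOfGraph_cell G), Finset.sum_boole]
    congr 2
    unfold eCount
    congr 1
    ext p
    simp [hcol]
  set a : ℝ := ((V i).card : ℝ) with ha
  set b : ℝ := ((V j).card : ℝ) with hb
  have ha' : (n:ℝ) ≤ 2 * k * a := by rw [ha]; exact_mod_cast hV i
  have hb' : (n:ℝ) ≤ 2 * k * b := by rw [hb]; exact_mod_cast hV j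
  have hapos : 0 < a := by
    by_contra hc
    push Not at hc
    nlinarith
  have hbpos : 0 < b := by
    by_contra hc
    push Not at hc
    nlinarith
  have hWint : ∫ p in partI V i ×ˢ partI V j, W p.1 p.2
      = a * b / (n:ℝ) ^ 2 * blkAvg V W i j := by
    unfold blkAvg
    rw [setAverage_eq, smul_eq_mul, volume_part, ← ha, ← hb]
    field_simp
  have hp : (pCount col i j : ℝ) = a * b := by
    rw [pCount_eq V col hcol]; push_cast; rfl
  have he : (eCount col G i j : ℝ) = a * b * eDens col (eCount col G) i j := by
    unfold eDens
    rw [hp]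
    field_simp
  rw [hGint, hWint, he] at h
  have e2 : a * b * eDens col (eCount col G) i j / (n:ℝ) ^ 2 - a * b / (n:ℝ) ^ 2 * blkAvg V W i j
      = a * b / (n:ℝ) ^ 2 * (eDens col (eCount col G) i j - blkAvg V W i j) := by ring
  rw [e2, abs_mul, abs_of_pos (by positivity), div_mul_eq_mul_div,
    div_le_iff₀ (by positivity)] at h
  have hab : (n:ℝ) ^ 2 ≤ 4 * (k:ℝ) ^ 2 * (a * b) := by
    calc (n:ℝ) ^ 2 = n * n := by ring
      _ ≤ (2 * k * a) * (2 * k * b) := by gcongr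
      _ = _ := by ring
  have h5 : a * b * |eDens col (eCount col G) i j - blkAvg V W i j|
      ≤ a * b * (4 * (k:ℝ) ^ 2 * δ) := by
    refine h.trans ?_
    calc δ * (n:ℝ) ^ 2 ≤ δ * (4 * (k:ℝ) ^ 2 * (a * b)) := by gcongr
      _ = _ := by ring
  exact le_of_mul_le_mul_left h5 (by positivity)

lemma condExpPart_cell {n k : ℕ} (W : ℝ → ℝ → ℝ)
    (V : Fin k → Finset (Fin n)) (col : Fin n → Fin k)
    (hcol : ∀ u i, u ∈ V i ↔ col u = i) (u v : Fin n) {x y : ℝ} (hx : x ∈ cellI n u)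
    (hy : y ∈ cellI n v) :
    condExpPart (partI V) W x y = blkAvg V W (col u) (col v) := by
  classical
  unfold condExpPart
  simp only [mem_partI V hx, mem_partI V hy, hcol]
  rw [Finset.sum_eq_single (col u), Finset.sum_eq_single (col v)]
  · simp [blkAvg]
  · intro j _ hj
    simp [hj.symm]
  · simp
  · intro i _ hi
    simp [hi.symm]
  · simp

lemma graphonEnt_eq {n k : ℕ} (hn : 1 ≤ n) (W : ℝ → ℝ → ℝ)
    (V : Fin k → Finset (Fin n)) (col : Fin n → Fin k)
    (hcol : ∀ u i, u ∈ V i ↔ col u = i) :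
    graphonEnt (condExpPart (partI V) W) =
      (∑ p : Fin n × Fin n, binEnt (blkAvg V W (col p.1) (col p.2))) / (n:ℝ) ^ 2 := by
  unfold graphonEnt
  rw [integral_step hn _ (fun u => ∑ v, binEnt (blkAvg V W (col u) (col v)) / n)]
  · rw [Fintype.sum_prod_type, Finset.sum_div]
    apply Finset.sum_congr rfl
    intro u _
    rw [Finset.sum_div, Finset.sum_div]
    apply Finset.sum_congr rfl
    intro v _
    rw [div_div, sq]
  · intro u x hx
    apply integral_step hn
    intro v y hy
    rw [condExpPart_cell W V col hcol u v hx hy]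

/-- Lemma 4.5: for an equipartition `P` of `{1,…,n}` into `k` parts,
`log₂ N̂_□(n,δ;W) / n² ≤ ½ Ent(E[W|P]) + ½ h̃(4k²δ) + 2k² log₂ n / n²`. -/
theorem stmt6 (W : ℝ → ℝ → ℝ) (hW : IsGraphon W) (n k : ℕ) (hk : 1 ≤ k) (hkn : k ≤ n)
    (δ : ℝ) (hδ : 0 < δ) (V : Fin k → Finset (Fin n))
    (hdisj : ∀ i j, i ≠ j → Disjoint (V i) (V j))
    (hcover : ∀ v, ∃ i, v ∈ V i)
    (hsize : ∀ i, (V i).card = n / k ∨ (V i).card = (n + k - 1) / k) :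
    Real.logb 2 (NhatCut n δ W : ℝ) / ((n : ℝ)^2) ≤
      (1/2) * graphonEnt (condExpPart
          (fun i : Fin k => ⋃ j ∈ V i, Set.Ioc (((j:ℕ):ℝ)/n) ((((j:ℕ):ℝ)+1)/n)) W) +
        (1/2) * htilde (4 * (k:ℝ)^2 * δ) + 2 * (k:ℝ)^2 * Real.logb 2 (n : ℝ) / ((n : ℝ)^2) := by
  classical
  have hn : 1 ≤ n := hk.trans hkn
  have hn' : (0:ℝ) < n := by exact_mod_cast hn
  choose col hcol0 using hcover
  have hcol : ∀ u i, u ∈ V i ↔ col u = i := by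
    intro u i
    constructor
    · intro h
      by_contra hne
      exact (Finset.disjoint_left.1 (hdisj _ _ hne)) (hcol0 u) h
    · rintro rfl
      exact hcol0 u
  have hV : ∀ i, n ≤ 2 * k * (V i).card := by
    intro i
    have h1 : n / k ≤ (V i).card := by
      rcases hsize i with h | h
      · exact h.ge
      · rw [h]
        exact Nat.div_le_div_right (by omega)
    have h2 : 1 ≤ n / k := (Nat.one_le_div_iff (by omega)).2 hkn
    have h3 : n < k * (n / k + 1) := Nat.lt_mul_div_succ n (by omega)
    calc n ≤ k * (n / k + 1) := h3.le
      _ ≤ k * (2 * (V i).card) := Nat.mul_le_mul_left _ (by omega)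
      _ = _ := by ring
  have hl2 : 0 < Real.log 2 := Real.log_pos (by norm_num)
  change Real.logb 2 (NhatCut n δ W : ℝ) / ((n : ℝ)^2) ≤
      (1/2) * graphonEnt (condExpPart (partI V) W) +
        (1/2) * htilde (4 * (k:ℝ)^2 * δ) + 2 * (k:ℝ)^2 * Real.logb 2 (n : ℝ) / ((n : ℝ)^2)
  rw [graphonEnt_eq hn W V col hcol]
  set S := ∑ p : Fin n × Fin n, Real.binEntropy (blkAvg V W (col p.1) (col p.2)) with hS
  set T := Real.binEntropy (min (4 * (k:ℝ)^2 * δ) (1/2)) with hT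
  have hS0 : 0 ≤ S := Finset.sum_nonneg fun p _ =>
    Real.binEntropy_nonneg (blkAvg_mem V hW _ _).1 (blkAvg_mem V hW _ _).2
  have hT0 : 0 ≤ T := by
    apply Real.binEntropy_nonneg
    · apply le_min <;> positivity
    · exact (min_le_right _ _).trans (by norm_num)
  have hlogn : 0 ≤ Real.log n := Real.log_nonneg (by exact_mod_cast hn)
  set B := (1/2) * (S + (n:ℝ)^2 * T) with hB
  have hN : (NhatCut n δ W : ℝ) ≤ Real.exp B * (n : ℝ) ^ (2 * k ^ 2) := by
    have hcard : NhatCut n δ W = (Finset.univ.filter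
        (fun G : SimpleGraph (Fin n) => dCut (graphonOfGraph G) W ≤ δ)).card := by
      unfold NhatCut
      rw [Nat.card_eq_fintype_card, Fintype.card_subtype]
    rw [hcard]
    apply card_le_of_bound hn col B
    intro G hG
    rw [Finset.mem_filter] at hG
    rw [hB]
    apply mul_le_mul_of_nonneg_left _ (by norm_num)
    calc _ ≤ ∑ p : Fin n × Fin n, (Real.binEntropy (blkAvg V W (col p.1) (col p.2)) + T) := by
          apply Finset.sum_le_sum
          intro p _
          exact binEntropy_le_add (eDens_mem _ _ _ _) (blkAvg_mem V hW _ _)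
            (dens_close hW hk V col hcol hn hV G hG.2 _ _)
      _ = S + (n:ℝ)^2 * T := by
          rw [Finset.sum_add_distrib, Finset.sum_const]
          simp [hS, sq]
  have hlog : Real.log (NhatCut n δ W : ℝ) ≤ B + 2 * (k:ℝ)^2 * Real.log n := by
    rcases Nat.eq_zero_or_pos (NhatCut n δ W) with h | h
    · rw [h]
      simp only [Nat.cast_zero, Real.log_zero]
      positivity
    · have h0 : (0:ℝ) < (NhatCut n δ W : ℝ) := by exact_mod_cast h
      have h1 := Real.log_le_log h0 hN
      rw [Real.log_mul (Real.exp_pos B).ne' (by positivity), Real.log_exp, Real.log_pow] at h1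
      push_cast at h1
      exact h1
  have e1 : ∑ p : Fin n × Fin n, binEnt (blkAvg V W (col p.1) (col p.2)) = S / Real.log 2 := by
    rw [hS, Finset.sum_div]
    exact Finset.sum_congr rfl fun p _ => binEnt_eq _
  rw [e1, htilde, binEnt_eq, ← hT, Real.logb, Real.logb]
  have e2 : 1 / 2 * (S / Real.log 2 / (n:ℝ) ^ 2) + 1 / 2 * (T / Real.log 2) +
      2 * (k:ℝ) ^ 2 * (Real.log n / Real.log 2) / (n:ℝ) ^ 2
      = (B + 2 * (k:ℝ)^2 * Real.log n) / Real.log 2 / (n:ℝ) ^ 2 := by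
    rw [hB]
    field_simp
  rw [e2]
  gcongr

end
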